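/- arXiv:2210.15730 — 2 statements merged into one kernel-verified Lean document; each statement's English description precedes it below -/
import Mathlib

section
/- Let a > 0 and κ ≥ 0 with 2κ + a > 1. The function b_{κ,a} is bounded on ℝ if and only if either (0 < a ≤ 2 and κ ≥ 1/2 − a/4) or (a ≥ 2 and κ ≥ 0). -/
/-!
By Liouville's substitution, `w(v) = √v J_l(v)` solves `w'' = ((l² - 1/4) / v² - 1) w`. Along this
perturbed oscillator the energy `w² + w'²` changes at relative rate at most `|l² - 1/4| / v²`, which
is integrable at infinity, so by Grönwall it stays between two positive constants. Hence `w` is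
bounded and does not tend to zero: `v ^ (l + 1/2) j_l(v)` is bounded at infinity, and `j_l` is
bounded on `(0, ∞)` only if `l ≥ -1/2`.

The even part of the kernel is `j_λ`, so `λ ≥ -1/2`, that is `κ ≥ 1/2 - a/4`, is necessary. It is
also sufficient, because `|x|` is proportional to `v ^ (2/a)` in the radial variable `v`, and the
odd part is controlled by the decay `j_{λ+2/a}(v) = O(v ^ (-(λ + 2/a + 1/2)))`.
-/

open Real MeasureTheory Finset

/-- Normalized Bessel function j_lambda(v). -/
noncomputable def nbessel (l v : ℝ) : ℝ :=
  Real.Gamma (l + 1) *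
    ∑' k : ℕ, (-1 : ℝ) ^ k / (Nat.factorial k * Real.Gamma (k + l + 1)) * (v / 2) ^ (2 * k)

/-- Kernel of the one-dimensional (kappa,a)-generalized Fourier transform. -/
noncomputable def bker (κ a : ℝ) (x : ℝ) : ℂ :=
  (nbessel ((2 * κ - 1) / a) ((2 / a) * |x| ^ (a / 2)) : ℂ)
    + Complex.exp (-(Real.pi / a) * Complex.I) * ((a ^ (-(2 / a)) : ℝ) : ℂ)
      * ((Real.Gamma ((2 * κ - 1) / a + 1) / Real.Gamma ((2 * κ - 1) / a + 1 + 2 / a) : ℝ) : ℂ)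
      * (x : ℂ) * (nbessel ((2 * κ - 1) / a + 2 / a) ((2 / a) * |x| ^ (a / 2)) : ℂ)

open Filter
open scoped Nat Topology

section PowerSeries

variable {𝕜 F : Type*} [NontriviallyNormedField 𝕜] [NormedAddCommGroup F] [NormedSpace 𝕜 F]
  [CompleteSpace F]

theorem hasSum_pow_smul_coeff_deriv (p : FormalMultilinearSeries 𝕜 𝕜 F) {z : 𝕜}
    (hz : ‖z‖ₑ < p.radius) :
    HasSum (fun n : ℕ => z ^ n • (n + 1) • p.coeff (n + 1)) (deriv p.sum z) := by
  have hsum := (p.hasFPowerSeriesOnBall (zero_le.trans_lt hz)).fderiv.hasSum (y := z) (by simpa)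
  simpa using hsum.mapL (ContinuousLinearMap.apply 𝕜 F (1 : 𝕜))

end PowerSeries

/-- The Bessel–Clifford function `∑ zᵏ / (k! Γ(l + k + 1))`, the entire function underlying the
Bessel function of order `l`. -/
noncomputable def besselClifford (l z : ℂ) : ℂ :=
  Complex.regularizedHGFun 0 {l + 1} z

theorem radius_regularizedHGFunSeries_zero_singleton (s : ℂ) :
    (Complex.regularizedHGFunSeries 0 {s}).radius = ⊤ :=
  Complex.radius_regularizedHGFunSeries_eq_top (by simp)

theorem hasSum_besselClifford (l z : ℂ) :
    HasSum (fun k : ℕ => z ^ k / (k ! * Complex.Gamma (l + k + 1))) (besselClifford l z) := by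
  have hsum := (Complex.regularizedHGFunSeries 0 {l + 1}).hasSum (x := z)
    (by simp [radius_regularizedHGFunSeries_zero_singleton])
  simpa [besselClifford, Complex.regularizedHGFun, Complex.regularizedHGFunCoeff, div_eq_mul_inv,
    add_right_comm] using hsum

theorem hasDerivAt_besselClifford (l z : ℂ) :
    HasDerivAt (besselClifford l) (besselClifford (l + 1) z) z := by
  set p := Complex.regularizedHGFunSeries 0 {l + 1} with hp
  have hz : ‖z‖ₑ < p.radius := by
    simp [hp, radius_regularizedHGFunSeries_zero_singleton]
  have hderiv : deriv (besselClifford l) z = besselClifford (l + 1) z := by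
    refine (hasSum_pow_smul_coeff_deriv p hz).unique
      ((hasSum_besselClifford (l + 1) z).congr_fun fun k => ?_)
    have hk : (k + 1 : ℂ) ≠ 0 := k.cast_add_one_ne_zero
    simp only [hp, Complex.regularizedHGFunSeries_coeff, Complex.regularizedHGFunCoeff,
      Multiset.map_zero, Multiset.prod_zero, Multiset.map_singleton, Multiset.prod_singleton,
      Nat.factorial_succ, smul_eq_mul, nsmul_eq_mul]
    push_cast
    rw [show l + 1 + (k + 1) = l + 1 + k + 1 by ring]
    field_simp
  rw [← hderiv]
  exact (p.hasFDerivAt_sum hz).differentiableAt.hasDerivAt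

theorem besselClifford_eq_add (l z : ℂ) :
    besselClifford l z = (l + 1) * besselClifford (l + 1) z + z * besselClifford (l + 2) z := by
  have hshift : HasSum (fun k : ℕ => k * (z ^ k / (k ! * Complex.Gamma (l + 1 + k + 1))))
      (z * besselClifford (l + 2) z) := by
    rw [← zero_add (z * _), ← zero_mul (z ^ 0 / _), ← Nat.cast_zero]
    refine HasSum.zero_add (((hasSum_besselClifford (l + 2) z).mul_left z).congr_fun fun k => ?_)
    have hk : (k + 1 : ℂ) ≠ 0 := k.cast_add_one_ne_zero
    rw [Nat.factorial_succ, pow_succ]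
    push_cast
    rw [show l + 1 + (k + 1) + 1 = l + 2 + k + 1 by ring]
    field_simp
  refine (hasSum_besselClifford l z).unique
    ((((hasSum_besselClifford (l + 1) z).mul_left (l + 1)).add hshift).congr_fun fun k => ?_)
  simp only [div_eq_mul_inv, mul_inv]
  rw [Complex.one_div_Gamma_eq_self_mul_one_div_Gamma_add_one (l + k + 1), add_right_comm l 1]
  ring

/-- The Bessel function of the first kind `J_l`, meaningful for `v > 0`, where the factor
`(v / 2) ^ l` is a genuine real power. Taking the real part loses nothing, as the Bessel–Clifford
function is real on the real line. -/
noncomputable def besselJ (l v : ℝ) : ℝ :=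
  (v / 2) ^ l * (besselClifford l (-(v / 2) ^ 2 : ℝ)).re

theorem hasDerivAt_besselClifford_re (l v : ℝ) :
    HasDerivAt (fun v : ℝ => (besselClifford l (-(v / 2) ^ 2 : ℝ)).re)
      (-(v / 2) * (besselClifford (l + 1 : ℝ) (-(v / 2) ^ 2 : ℝ)).re) v := by
  have hinner : HasDerivAt (fun v : ℝ => -(v / 2) ^ 2) (-(v / 2)) v :=
    (((hasDerivAt_id v).div_const 2).pow 2).neg.congr_deriv <| by
      simp only [Nat.cast_ofNat, id_eq, Nat.add_one_sub_one, pow_one]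
      ring
  rw [mul_comm, Complex.ofReal_add, Complex.ofReal_one]
  exact (hasDerivAt_besselClifford l (-(v / 2) ^ 2 : ℝ)).real_of_complex.comp v hinner

theorem besselJ_add_two {l v : ℝ} (hv : 0 < v) :
    besselJ (l + 2) v = 2 * (l + 1) / v * besselJ (l + 1) v - besselJ l v := by
  have hrec := congrArg Complex.re (besselClifford_eq_add l (-(v / 2) ^ 2 : ℝ))
  have hcast : (l + 1 : ℂ) = ((l + 1 : ℝ) : ℂ) ∧ (l + 2 : ℂ) = ((l + 2 : ℝ) : ℂ) := by
    constructor <;> push_cast <;> rfl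
  rw [hcast.1, hcast.2, Complex.add_re, Complex.re_ofReal_mul, Complex.re_ofReal_mul] at hrec
  have hv2 : v / 2 ≠ 0 := by positivity
  have hpow : (v / 2) ^ (l + 2) = (v / 2) ^ l * (v / 2) ^ 2 := by
    exact_mod_cast Real.rpow_add_natCast hv2 l 2
  rw [besselJ, besselJ, besselJ, hrec, hpow, Real.rpow_add_one hv2]
  field_simp
  ring

theorem hasDerivAt_besselJ {l v : ℝ} (hv : 0 < v) :
    HasDerivAt (besselJ l) (l / v * besselJ l v - besselJ (l + 1) v) v := by
  have hv2 : v / 2 ≠ 0 := by positivity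
  have hpow : HasDerivAt (fun v : ℝ => (v / 2) ^ l) (l / v * (v / 2) ^ l) v := by
    refine (((hasDerivAt_id v).div_const 2).rpow_const (Or.inl hv2)).congr_deriv ?_
    rw [id, Real.rpow_sub_one hv2]
    field_simp
  refine (hpow.mul (hasDerivAt_besselClifford_re l v)).congr_deriv ?_
  rw [besselJ, besselJ, Real.rpow_add_one hv2]
  ring

theorem hasDerivAt_besselJ_add_one {l v : ℝ} (hv : 0 < v) :
    HasDerivAt (besselJ (l + 1)) (besselJ l v - (l + 1) / v * besselJ (l + 1) v) v := by
  refine (hasDerivAt_besselJ hv).congr_deriv ?_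
  rw [show l + 1 + 1 = l + 2 by ring, besselJ_add_two hv]
  ring

/-- The Liouville normal form `√v J_l(v)` of the Bessel function, for which Bessel's equation has
no first-order term. -/
noncomputable def besselLiouville (l v : ℝ) : ℝ :=
  √v * besselJ l v

/-- The derivative of `besselLiouville l`, expressed through `J_l` and `J_{l+1}`. -/
noncomputable def besselLiouvilleDeriv (l v : ℝ) : ℝ :=
  √v * ((l + 1 / 2) / v * besselJ l v - besselJ (l + 1) v)

theorem hasDerivAt_sqrt_eq_div {v : ℝ} (hv : 0 < v) : HasDerivAt (√·) (√v / (2 * v)) v := by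
  refine (Real.hasDerivAt_sqrt hv.ne').congr_deriv ?_
  rw [div_eq_div_iff (by positivity) (by positivity)]
  linear_combination -2 * Real.mul_self_sqrt hv.le

theorem hasDerivAt_besselLiouville {l v : ℝ} (hv : 0 < v) :
    HasDerivAt (besselLiouville l) (besselLiouvilleDeriv l v) v := by
  refine ((hasDerivAt_sqrt_eq_div hv).mul (hasDerivAt_besselJ hv)).congr_deriv ?_
  rw [besselLiouvilleDeriv]
  field_simp
  ring

theorem hasDerivAt_besselLiouvilleDeriv {l v : ℝ} (hv : 0 < v) :
    HasDerivAt (besselLiouvilleDeriv l)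
      (((l ^ 2 - 1 / 4) / v ^ 2 - 1) * besselLiouville l v) v := by
  have hcoeff : HasDerivAt (fun v => (l + 1 / 2) / v) (-(l + 1 / 2) / v ^ 2) v := by
    simpa using (hasDerivAt_const v (l + 1 / 2)).fun_div (hasDerivAt_id v) hv.ne'
  refine ((hasDerivAt_sqrt_eq_div hv).mul ((hcoeff.mul (hasDerivAt_besselJ hv)).sub
    (hasDerivAt_besselJ_add_one hv))).congr_deriv ?_
  simp only [besselLiouville, Pi.sub_apply, Pi.mul_apply]
  field_simp
  ring

section Energy

variable {D : Set ℝ} {E E' w w' q Q Q' : ℝ → ℝ} {u v : ℝ}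

theorem le_mul_exp_sub_of_deriv_le (hD : Convex ℝ D)
    (hE : ∀ x ∈ D, HasDerivWithinAt E (E' x) D x) (hQ : ∀ x ∈ D, HasDerivWithinAt Q (Q' x) D x)
    (hle : ∀ x ∈ D, E' x ≤ Q' x * E x) (hu : u ∈ D) (hv : v ∈ D) (huv : u ≤ v) :
    E v ≤ E u * Real.exp (Q v - Q u) := by
  have hderiv : ∀ x ∈ D, HasDerivWithinAt (fun x => E x * Real.exp (-Q x))
      ((E' x - Q' x * E x) * Real.exp (-Q x)) D x := fun x hx =>
    ((hE x hx).mul (hQ x hx).neg.exp).congr_deriv (by simp only [Pi.neg_apply]; ring)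
  have hanti : AntitoneOn (fun x => E x * Real.exp (-Q x)) D :=
    antitoneOn_of_hasDerivWithinAt_nonpos hD (fun x hx => (hderiv x hx).continuousWithinAt)
      (fun x hx => (hderiv x (interior_subset hx)).mono interior_subset) fun x hx =>
      mul_nonpos_of_nonpos_of_nonneg (sub_nonpos.2 (hle x (interior_subset hx)))
        (Real.exp_pos _).le
  calc E v = E v * Real.exp (-Q v) * Real.exp (Q v) := by
        rw [mul_assoc, ← Real.exp_add, neg_add_cancel, Real.exp_zero, mul_one]
    _ ≤ E u * Real.exp (-Q u) * Real.exp (Q v) :=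
        mul_le_mul_of_nonneg_right (hanti hu hv huv) (Real.exp_pos _).le
    _ = E u * Real.exp (Q v - Q u) := by
        rw [mul_assoc, ← Real.exp_add, neg_add_eq_sub]

theorem hasDerivWithinAt_sq_add_sq {x : ℝ} (hw : HasDerivWithinAt w (w' x) D x)
    (hw' : HasDerivWithinAt w' ((q x - 1) * w x) D x) :
    HasDerivWithinAt (fun x => w x ^ 2 + w' x ^ 2) (q x * (2 * w x * w' x)) D x :=
  ((hw.pow 2).add (hw'.pow 2)).congr_deriv (by push_cast; ring)

theorem abs_mul_two_mul_le (a b c : ℝ) : |c * (2 * a * b)| ≤ |c| * (a ^ 2 + b ^ 2) := by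
  rw [abs_mul]
  gcongr
  exact abs_le.2 ⟨by nlinarith [sq_nonneg (a + b)], two_mul_le_add_sq a b⟩

theorem sq_add_sq_le_mul_exp (hD : Convex ℝ D) (hw : ∀ x ∈ D, HasDerivWithinAt w (w' x) D x)
    (hw' : ∀ x ∈ D, HasDerivWithinAt w' ((q x - 1) * w x) D x)
    (hQ : ∀ x ∈ D, HasDerivWithinAt Q |q x| D x) (hu : u ∈ D) (hv : v ∈ D) (huv : u ≤ v) :
    w v ^ 2 + w' v ^ 2 ≤ (w u ^ 2 + w' u ^ 2) * Real.exp (Q v - Q u) :=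
  le_mul_exp_sub_of_deriv_le hD (fun x hx => hasDerivWithinAt_sq_add_sq (hw x hx) (hw' x hx))
    hQ (fun _ _ => (le_abs_self _).trans (abs_mul_two_mul_le _ _ _)) hu hv huv

theorem mul_exp_le_sq_add_sq (hD : Convex ℝ D) (hw : ∀ x ∈ D, HasDerivWithinAt w (w' x) D x)
    (hw' : ∀ x ∈ D, HasDerivWithinAt w' ((q x - 1) * w x) D x)
    (hQ : ∀ x ∈ D, HasDerivWithinAt Q |q x| D x) (hu : u ∈ D) (hv : v ∈ D) (huv : u ≤ v) :
    (w u ^ 2 + w' u ^ 2) * Real.exp (Q u - Q v) ≤ w v ^ 2 + w' v ^ 2 := by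
  have hneg := le_mul_exp_sub_of_deriv_le hD
    (fun x hx => (hasDerivWithinAt_sq_add_sq (hw x hx) (hw' x hx)).neg)
    (fun x hx => (hQ x hx).neg) (fun x _ => ?_) hu hv huv
  · simp only [Pi.neg_apply, neg_mul, neg_sub_neg] at hneg
    exact neg_le_neg_iff.1 hneg
  · simpa only [Pi.neg_apply, neg_mul_neg] using
      (neg_le_abs _).trans (abs_mul_two_mul_le (w x) (w' x) (q x))

end Energy

theorem frequently_abs_lt_of_tendsto {f f' : ℝ → ℝ} {L ε : ℝ} (hf : Tendsto f atTop (𝓝 L))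
    (hf' : ∀ᶠ x in atTop, HasDerivAt f (f' x) x) (hε : 0 < ε) : ∃ᶠ x in atTop, |f' x| < ε := by
  have hshift : Tendsto (fun x => f (x + 1)) atTop (𝓝 L) :=
    hf.comp (tendsto_atTop_add_const_right _ 1 tendsto_id)
  have hdiff : ∀ᶠ x in atTop, |f (x + 1) - f x| < ε := by
    simpa [Real.dist_eq] using Metric.tendsto_nhds.1 (hshift.sub hf) ε hε
  obtain ⟨N, hN⟩ := eventually_atTop.1 (hf'.and hdiff)
  refine frequently_atTop.2 fun M => ?_
  set V := max M N
  have hderiv : ∀ x, V ≤ x → HasDerivAt f (f' x) x :=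
    fun x hx => (hN x ((le_max_right _ _).trans hx)).1
  obtain ⟨ξ, hξ, hslope⟩ := exists_hasDerivAt_eq_slope f f' (lt_add_one V)
    (fun x hx => (hderiv x hx.1).continuousAt.continuousWithinAt) fun x hx => hderiv x hx.1.le
  refine ⟨ξ, (le_max_left _ _).trans hξ.1.le, ?_⟩
  rw [hslope, add_sub_cancel_left, div_one]
  exact (hN V (le_max_right _ _)).2

theorem not_tendsto_zero_of_le_sq_add_sq {f f' : ℝ → ℝ} {δ : ℝ} (hδ : 0 < δ)
    (hf' : ∀ᶠ x in atTop, HasDerivAt f (f' x) x)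
    (hle : ∀ᶠ x in atTop, δ ≤ f x ^ 2 + f' x ^ 2) : ¬ Tendsto f atTop (𝓝 0) := by
  intro hf
  have hsqrt : 0 < √(δ / 2) := by positivity
  have hsmall : ∀ᶠ x in atTop, |f x| < √(δ / 2) := by
    simpa using Metric.tendsto_nhds.1 hf _ hsqrt
  obtain ⟨x, hx', hx, hδx⟩ :=
    ((frequently_abs_lt_of_tendsto hf hf' hsqrt).and_eventually (hsmall.and hle)).exists
  rw [Real.lt_sqrt (abs_nonneg _), sq_abs] at hx hx'
  linarith

theorem hasDerivAt_neg_abs_div (c : ℝ) {v : ℝ} (hv : v ≠ 0) :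
    HasDerivAt (fun v => -|c| / v) |c / v ^ 2| v := by
  refine ((hasDerivAt_const v (-|c|)).fun_div (hasDerivAt_id v) hv).congr_deriv ?_
  simp [abs_div]

section Asymptotics

variable {l : ℝ}

theorem besselLiouville_energy_le {u v : ℝ} (hu : 0 < u) (huv : u ≤ v) :
    besselLiouville l v ^ 2 + besselLiouvilleDeriv l v ^ 2 ≤
      (besselLiouville l u ^ 2 + besselLiouvilleDeriv l u ^ 2) *
        Real.exp (|l ^ 2 - 1 / 4| / u) := by
  have hle := sq_add_sq_le_mul_exp (convex_Ioi 0)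
    (fun v hv => (hasDerivAt_besselLiouville (l := l) hv).hasDerivWithinAt)
    (fun v hv => (hasDerivAt_besselLiouvilleDeriv hv).hasDerivWithinAt)
    (fun v hv => (hasDerivAt_neg_abs_div _ (ne_of_gt hv)).hasDerivWithinAt) hu (hu.trans_le huv) huv
  refine hle.trans ?_
  gcongr
  have hv : 0 ≤ |l ^ 2 - 1 / 4| / v := div_nonneg (abs_nonneg _) (hu.le.trans huv)
  linarith [neg_div v |l ^ 2 - 1 / 4|, neg_div u |l ^ 2 - 1 / 4|]

theorem le_besselLiouville_energy {u v : ℝ} (hu : 0 < u) (huv : u ≤ v) :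
    (besselLiouville l u ^ 2 + besselLiouvilleDeriv l u ^ 2) *
        Real.exp (-|l ^ 2 - 1 / 4| / u) ≤
      besselLiouville l v ^ 2 + besselLiouvilleDeriv l v ^ 2 := by
  have hle := mul_exp_le_sq_add_sq (convex_Ioi 0)
    (fun v hv => (hasDerivAt_besselLiouville (l := l) hv).hasDerivWithinAt)
    (fun v hv => (hasDerivAt_besselLiouvilleDeriv hv).hasDerivWithinAt)
    (fun v hv => (hasDerivAt_neg_abs_div _ (ne_of_gt hv)).hasDerivWithinAt) hu (hu.trans_le huv) huv
  refine le_trans ?_ hle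
  gcongr
  have hv : 0 ≤ |l ^ 2 - 1 / 4| / v := div_nonneg (abs_nonneg _) (hu.le.trans huv)
  linarith [neg_div v |l ^ 2 - 1 / 4|]

theorem exists_abs_besselLiouville_le (l : ℝ) :
    ∃ C : ℝ, ∀ v, 1 ≤ v → |besselLiouville l v| ≤ C :=
  ⟨_, fun _ hv => Real.abs_le_sqrt <|
    (le_add_of_nonneg_right (sq_nonneg _)).trans (besselLiouville_energy_le one_pos hv)⟩

theorem not_tendsto_besselLiouville_zero {u : ℝ} (hu : 0 < u) (hne : besselLiouville l u ≠ 0) :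
    ¬ Tendsto (besselLiouville l) atTop (𝓝 0) := by
  refine not_tendsto_zero_of_le_sq_add_sq ?_
    ((eventually_gt_atTop 0).mono fun v hv => hasDerivAt_besselLiouville hv)
    ((eventually_ge_atTop u).mono fun v huv => le_besselLiouville_energy hu huv)
  positivity

theorem nbessel_eq_besselClifford_re (l v : ℝ) :
    nbessel l v = Real.Gamma (l + 1) * (besselClifford l (-(v / 2) ^ 2 : ℝ)).re := by
  rw [nbessel, ← (Complex.hasSum_re (hasSum_besselClifford l (-(v / 2) ^ 2 : ℝ))).tsum_eq]
  congr! 3 with k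
  have hterm : ((-(v / 2) ^ 2 : ℝ) : ℂ) ^ k / (k ! * Complex.Gamma (l + k + 1)) =
      ((-(v / 2) ^ 2) ^ k / (k ! * Real.Gamma (l + k + 1)) : ℝ) := by
    push_cast [← Complex.Gamma_ofReal]
    rfl
  rw [hterm, Complex.ofReal_re, neg_pow ((v / 2) ^ 2), ← pow_mul, add_comm (k : ℝ) l,
    mul_div_right_comm]

theorem continuous_nbessel (l : ℝ) : Continuous (nbessel l) := by
  simp only [funext (nbessel_eq_besselClifford_re l)]
  exact continuous_const.mul <| continuous_iff_continuousAt.2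
    fun v => (hasDerivAt_besselClifford_re l v).continuousAt

theorem nbessel_zero (hΓ : Real.Gamma (l + 1) ≠ 0) : nbessel l 0 = 1 := by
  rw [nbessel, tsum_eq_single 0 fun k hk => by simp [hk]]
  simp [hΓ]

theorem rpow_mul_nbessel {v : ℝ} (hv : 0 < v) :
    v ^ (l + 1 / 2) * nbessel l v = 2 ^ l * Real.Gamma (l + 1) * besselLiouville l v := by
  rw [nbessel_eq_besselClifford_re, besselLiouville, besselJ, Real.rpow_add hv,
    ← Real.sqrt_eq_rpow, Real.div_rpow hv.le zero_le_two]
  field_simp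

theorem exists_rpow_mul_abs_nbessel_le {r : ℝ} (hr : 0 ≤ r) (hrl : r ≤ l + 1 / 2) :
    ∃ C : ℝ, ∀ v, 0 ≤ v → v ^ r * |nbessel l v| ≤ C := by
  obtain ⟨C₁, h₁⟩ := exists_abs_besselLiouville_le l
  obtain ⟨C₂, h₂⟩ := (isCompact_Icc (a := (0 : ℝ)) (b := 1)).exists_bound_of_continuousOn
    (continuous_nbessel l).continuousOn
  refine ⟨max (|2 ^ l * Real.Gamma (l + 1)| * C₁) C₂, fun v hv => ?_⟩
  rcases le_total v 1 with hv1 | hv1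
  · refine le_max_of_le_right (le_trans ?_ (h₂ v ⟨hv, hv1⟩))
    exact mul_le_of_le_one_left (abs_nonneg _) (Real.rpow_le_one hv hv1 hr)
  · refine le_max_of_le_left ?_
    have hv0 : 0 < v := one_pos.trans_le hv1
    calc v ^ r * |nbessel l v| ≤ v ^ (l + 1 / 2) * |nbessel l v| := by gcongr
      _ = |v ^ (l + 1 / 2) * nbessel l v| := by
        rw [abs_mul, abs_of_pos (Real.rpow_pos_of_pos hv0 _)]
      _ = |2 ^ l * Real.Gamma (l + 1)| * |besselLiouville l v| := by
        rw [rpow_mul_nbessel hv0, abs_mul]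
      _ ≤ |2 ^ l * Real.Gamma (l + 1)| * C₁ := by gcongr; exact h₁ v hv1

theorem exists_besselLiouville_ne_zero (hΓ : Real.Gamma (l + 1) ≠ 0) :
    ∃ u, 0 < u ∧ besselLiouville l u ≠ 0 := by
  have hne : ∀ᶠ u in 𝓝[>] 0, nbessel l u ≠ 0 :=
    ((continuous_nbessel l).continuousAt.eventually_ne
      (by rw [nbessel_zero hΓ]; exact one_ne_zero)).filter_mono nhdsWithin_le_nhds
  obtain ⟨u, hu, hu0⟩ := (hne.and self_mem_nhdsWithin).exists
  refine ⟨u, hu0, fun hzero => ?_⟩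
  have hprod := rpow_mul_nbessel (l := l) hu0
  rw [hzero, mul_zero] at hprod
  exact mul_ne_zero (Real.rpow_pos_of_pos hu0 _).ne' hu hprod

theorem neg_half_le_of_abs_nbessel_le {M : ℝ} (hΓ : Real.Gamma (l + 1) ≠ 0)
    (hM : ∀ v, 0 < v → |nbessel l v| ≤ M) : -1 / 2 ≤ l := by
  by_contra! hl
  obtain ⟨u, hu, hne⟩ := exists_besselLiouville_ne_zero hΓ
  have hdecay : Tendsto (fun v : ℝ => v ^ (l + 1 / 2)) atTop (𝓝 0) := by
    simpa only [neg_neg] using tendsto_rpow_neg_atTop (y := -(l + 1 / 2)) (by linarith)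
  have hprod : Tendsto (fun v : ℝ => v ^ (l + 1 / 2) * nbessel l v) atTop (𝓝 0) :=
    hdecay.zero_mul_isBoundedUnder_le <|
      isBoundedUnder_of_eventually_le ((eventually_gt_atTop 0).mono hM)
  have hc : 2 ^ l * Real.Gamma (l + 1) ≠ 0 := mul_ne_zero (by positivity) hΓ
  refine not_tendsto_besselLiouville_zero hu hne ?_
  have hdiv := hprod.div_const (2 ^ l * Real.Gamma (l + 1))
  rw [zero_div] at hdiv
  refine hdiv.congr' ((eventually_gt_atTop 0).mono fun v hv => ?_)
  rw [rpow_mul_nbessel hv, mul_div_cancel_left₀ _ hc]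

end Asymptotics

section Kernel

variable {a κ : ℝ}

theorem neg_half_le_div_iff (ha : 0 < a) :
    -1 / 2 ≤ (2 * κ - 1) / a ↔ 1 / 2 - a / 4 ≤ κ := by
  rw [le_div_iff₀ ha]
  constructor <;> intro <;> linarith

theorem rpow_two_div_radial (ha : 0 < a) (x : ℝ) :
    (a / 2 * (2 / a * |x| ^ (a / 2))) ^ (2 / a) = |x| := by
  have hinv : a / 2 * (2 / a) = 1 := by field_simp
  rw [← mul_assoc, hinv, one_mul, ← Real.rpow_mul (abs_nonneg x), hinv, Real.rpow_one]

theorem radial_rpow_two_div (ha : 0 < a) {v : ℝ} (hv : 0 ≤ v) :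
    2 / a * |(a / 2 * v) ^ (2 / a)| ^ (a / 2) = v := by
  have hinv : 2 / a * (a / 2) = 1 := by field_simp
  rw [abs_of_nonneg (by positivity), ← Real.rpow_mul (by positivity), hinv, Real.rpow_one,
    ← mul_assoc, hinv, one_mul]

theorem bker_add_bker_neg (κ a x : ℝ) :
    bker κ a x + bker κ a (-x) =
      2 * (nbessel ((2 * κ - 1) / a) ((2 / a) * |x| ^ (a / 2)) : ℂ) := by
  simp only [bker, abs_neg]
  push_cast
  ring

theorem abs_nbessel_le_of_norm_bker_le (ha : 0 < a) {M : ℝ} (hM : ∀ x, ‖bker κ a x‖ ≤ M)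
    {v : ℝ} (hv : 0 ≤ v) : |nbessel ((2 * κ - 1) / a) v| ≤ M := by
  set x := (a / 2 * v) ^ (2 / a)
  have heven := bker_add_bker_neg κ a x
  rw [radial_rpow_two_div ha hv] at heven
  have hnorm : 2 * |nbessel ((2 * κ - 1) / a) v| ≤ M + M := by
    calc 2 * |nbessel ((2 * κ - 1) / a) v| = ‖bker κ a x + bker κ a (-x)‖ := by
          rw [heven, norm_mul, Complex.norm_ofNat, Complex.norm_real, Real.norm_eq_abs]
      _ ≤ M + M := norm_add_le_of_le (hM x) (hM (-x))
  linarith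

theorem exists_norm_bker_le (ha : 0 < a) (hκ : 1 / 2 - a / 4 ≤ κ) :
    ∃ M : ℝ, ∀ x : ℝ, ‖bker κ a x‖ ≤ M := by
  set l : ℝ := (2 * κ - 1) / a with hl
  have hl2 : 0 ≤ l + 1 / 2 := by linarith [(neg_half_le_div_iff ha).2 hκ]
  obtain ⟨C₁, h₁⟩ := exists_rpow_mul_abs_nbessel_le le_rfl hl2
  obtain ⟨C₂, h₂⟩ := exists_rpow_mul_abs_nbessel_le (l := l + 2 / a) (r := 2 / a)
    (by positivity) (by linarith)
  set K : ℝ := ‖Complex.exp (-(Real.pi / a) * Complex.I) * ((a ^ (-(2 / a)) : ℝ) : ℂ)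
      * ((Real.Gamma (l + 1) / Real.Gamma (l + 1 + 2 / a) : ℝ) : ℂ)‖ with hK
  refine ⟨C₁ + K * ((a / 2) ^ (2 / a) * C₂), fun x => ?_⟩
  set v : ℝ := (2 / a) * |x| ^ (a / 2) with hv
  have hv0 : 0 ≤ v := by positivity
  have hx : |x| = (a / 2) ^ (2 / a) * v ^ (2 / a) := by
    rw [← Real.mul_rpow (by positivity) hv0, rpow_two_div_radial ha]
  have heven : |nbessel l v| ≤ C₁ := by simpa using h₁ v hv0
  have hodd : |x| * |nbessel (l + 2 / a) v| ≤ (a / 2) ^ (2 / a) * C₂ := by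
    rw [hx, mul_assoc]
    gcongr
    exact h₂ v hv0
  rw [bker, ← hl, ← hv, mul_assoc _ (x : ℂ)]
  refine norm_add_le_of_le (by simpa using heven) ?_
  rw [norm_mul, ← hK, norm_mul, Complex.norm_real, Complex.norm_real]
  exact mul_le_mul_of_nonneg_left hodd (norm_nonneg _)

end Kernel

theorem stmt3_general (a κ : ℝ) (ha : 0 < a) (h : 1 < 2 * κ + a) :
    (∃ M : ℝ, ∀ x : ℝ, ‖bker κ a x‖ ≤ M) ↔ 1 / 2 - a / 4 ≤ κ := by
  have hΓ : Real.Gamma ((2 * κ - 1) / a + 1) ≠ 0 := by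
    refine (Real.Gamma_pos_of_pos ?_).ne'
    rw [div_add_one ha.ne']
    exact div_pos (by linarith) ha
  refine ⟨fun ⟨M, hM⟩ => (neg_half_le_div_iff ha).1 ?_, exists_norm_bker_le ha⟩
  exact neg_half_le_of_abs_nbessel_le hΓ fun v hv => abs_nbessel_le_of_norm_bker_le ha hM hv.le

/-- criterion for the boundedness of the kernel. -/
theorem stmt3 (a κ : ℝ) (ha : 0 < a) (hκ : 0 ≤ κ) (h : 1 < 2 * κ + a) :
    (∃ M : ℝ, ∀ x : ℝ, ‖bker κ a x‖ ≤ M) ↔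
      ((0 < a ∧ a ≤ 2 ∧ 1 / 2 - a / 4 ≤ κ) ∨ (2 ≤ a ∧ 0 ≤ κ)) := by
  rw [stmt3_general a κ ha h]
  grind
end

section
/- For every integer r ≥ 1, every real λ > −1/2 and every v ∈ ℝ, one has e_{2r}(v,λ) = c_λ ∫_{−1}^{1} (1−t²)^{λ−1/2} (1 + sign(v) · S_{2r}(t,λ)) e^{−ivt} dt, where S_{2r}(t,λ) = Σ_{s=0}^{r} (−1)^s · binom(r,s) · ((λ+r)_s/(λ+1/2)_s) · (1−t²)^s. -/
open Real MeasureTheory Finset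

/-- Pochhammer symbol (z)_n = z(z+1)...(z+n-1), with (z)_0 = 1. -/
noncomputable def poch (z : ℝ) (n : ℕ) : ℝ := ∏ i ∈ Finset.range n, (z + i)

/-- The constant c_lambda = Gamma(lambda+1)/(sqrt(pi) Gamma(lambda+1/2)). -/
noncomputable def cgeg (l : ℝ) : ℝ :=
  Real.Gamma (l + 1) / (Real.sqrt Real.pi * Real.Gamma (l + 1 / 2))

/-- The function e_{2r}(v, lambda). -/
noncomputable def e2r (r : ℕ) (l : ℝ) (v : ℝ) : ℝ :=
  nbessel l v + (-1 : ℝ) ^ r * (v ^ (2 * r) / (2 ^ (2 * r) * poch (l + 1) (2 * r))) *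
    nbessel (l + 2 * r) v * Real.sign v

/-- The sum S_{2r}(t, lambda). -/
noncomputable def S2r (r : ℕ) (l : ℝ) (t : ℝ) : ℝ :=
  ∑ s ∈ Finset.range (r + 1), (-1 : ℝ) ^ s * (r.choose s : ℝ) *
    (poch (l + r) s / poch (l + 1 / 2) s) * (1 - t ^ 2) ^ s

/-!
Expanding the cosine under the integral and evaluating the even moments of `(1 - t²)^(λ - 1/2)` by
beta integrals gives Poisson's formula
`∫ (1 - t²)^(λ - 1/2) cos (v t) dt = √π Γ(λ + 1/2) J(λ)`, where `J(λ) = j_λ(v) / Γ(λ + 1)`.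
A factor `(1 - t²)^s` shifts `λ` to `λ + s` and brings out `(λ + 1/2)_s`, which the denominator in
`S_{2r}` cancels. It remains to see that `∑ₛ (-1)^s (r choose s) (λ + r)_s J(λ + s)` equals
`(-1)^r (v / 2)^(2r) J(λ + 2r)`. By Chu–Vandermonde the `k`-th coefficient of the sum is that of
`J(λ + r)` times `k (k - 1) ⋯ (k - r + 1)`; the terms with `k < r` vanish, and reindexing
the others by `k = m + r` gives the series of `J(λ + 2r)`.
-/

lemma poch_succ (z : ℝ) (n : ℕ) : poch z (n + 1) = poch z n * (z + n) :=
  Finset.prod_range_succ _ _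

lemma poch_pos {z : ℝ} (hz : 0 < z) (n : ℕ) : 0 < poch z n :=
  Finset.prod_pos fun _ _ => by positivity

lemma poch_eq_ascPochhammer_eval (z : ℝ) (n : ℕ) : poch z n = (ascPochhammer ℝ n).eval z := by
  induction n with
  | zero => simp [poch]
  | succ n ih => rw [poch_succ, ih, ascPochhammer_succ_eval]

lemma descPochhammer_smeval_eq_poch (z : ℝ) (n : ℕ) :
    (descPochhammer ℤ n).smeval z = poch (z - n + 1) n := by
  rw [Polynomial.descPochhammer_smeval_eq_ascPochhammer, Polynomial.ascPochhammer_smeval_eq_eval,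
    poch_eq_ascPochhammer_eval]

lemma descPochhammer_smeval_neg (z : ℝ) (n : ℕ) :
    (descPochhammer ℤ n).smeval (-z) = (-1) ^ n * poch z n := by
  have h := Polynomial.ascPochhammer_smeval_neg_eq_descPochhammer (-z) n
  rw [neg_neg, Polynomial.ascPochhammer_smeval_eq_eval, ← poch_eq_ascPochhammer_eval] at h
  rw [h, Units.smul_def, Int.coe_negOnePow_natCast, zsmul_eq_mul, ← mul_assoc]
  push_cast
  rw [← mul_pow, neg_one_mul, neg_neg, one_pow, one_mul]

lemma poch_natCast_sub_add_one (k r : ℕ) : poch (k - r + 1) r = k.descFactorial r := by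
  rw [← descPochhammer_smeval_eq_poch, Polynomial.descPochhammer_smeval_eq_descFactorial]

lemma sum_choose_mul_poch_mul_poch (r : ℕ) (b c : ℝ) :
    ∑ s ∈ range (r + 1), (-1) ^ s * r.choose s * poch b s * poch (c + s) (r - s) =
      poch (c - b) r := by
  have vandermonde := Ring.descPochhammer_smeval_add r (Commute.all (-b) (c + r - 1))
  rw [Nat.sum_antidiagonal_eq_sum_range_succ_mk, descPochhammer_smeval_eq_poch,
    show -b + (c + r - 1) - r + 1 = c - b by ring] at vandermonde
  rw [vandermonde]
  refine sum_congr rfl fun s hs => ?_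
  have hsr : s ≤ r := mem_range_succ_iff.1 hs
  rw [descPochhammer_smeval_neg, descPochhammer_smeval_eq_poch, Nat.cast_sub hsr,
    show c + r - 1 - (r - s) + 1 = c + s by ring]
  ring

-- `Γ` takes the junk value `0` at its poles, so `(Γ z)⁻¹` is the entire reciprocal Gamma function.
lemma inv_Gamma_eq_poch_mul_inv_Gamma_add (z : ℝ) (n : ℕ) :
    (Gamma z)⁻¹ = poch z n * (Gamma (z + n))⁻¹ := by
  have hrec (x : ℝ) : (Gamma x)⁻¹ = x * (Gamma (x + 1))⁻¹ := by
    rcases eq_or_ne x 0 with rfl | hx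
    · simp [Gamma_zero]
    · rw [Gamma_add_one hx, mul_inv, mul_inv_cancel_left₀ hx]
  induction n with
  | zero => simp [poch]
  | succ n ih => rw [ih, poch_succ, hrec (z + n), mul_assoc, Nat.cast_succ, add_assoc]

lemma Gamma_add_natCast {z : ℝ} (hz : 0 < z) (n : ℕ) : Gamma (z + n) = poch z n * Gamma z := by
  have hz' := (Gamma_pos_of_pos hz).ne'
  have hzn := (Gamma_pos_of_pos (show 0 < z + n by positivity)).ne'
  have h := inv_Gamma_eq_poch_mul_inv_Gamma_add z n
  field_simp at h
  linarith

lemma sum_choose_mul_poch_div_Gamma (r : ℕ) (b c : ℝ) :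
    ∑ s ∈ range (r + 1), (-1) ^ s * r.choose s * poch b s / Gamma (c + s) =
      poch (c - b) r / Gamma (c + r) := by
  rw [← sum_choose_mul_poch_mul_poch, sum_div]
  refine sum_congr rfl fun s hs => ?_
  rw [div_eq_mul_inv, inv_Gamma_eq_poch_mul_inv_Gamma_add _ (r - s), add_assoc c, ← Nat.cast_add,
    Nat.add_sub_cancel' (mem_range_succ_iff.1 hs)]
  ring

/-- The `k`-th term of the power series defining `regBessel l v`. -/
noncomputable def besselTerm (l v : ℝ) (k : ℕ) : ℝ :=
  (-1) ^ k / (k.factorial * Gamma (k + l + 1)) * (v / 2) ^ (2 * k)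

/-- The regularized Bessel function `(v / 2) ^ (-l) * J_l(v)`, that is `j_l(v) / Γ(l + 1)`,
which is entire in `l`. -/
noncomputable def regBessel (l v : ℝ) : ℝ :=
  ∑' k, besselTerm l v k

lemma nbessel_eq_Gamma_mul_regBessel (l v : ℝ) :
    nbessel l v = Gamma (l + 1) * regBessel l v := rfl

lemma summable_besselTerm (l v : ℝ) : Summable (besselTerm l v) := by
  have hradius :=
    Complex.radius_regularizedHGFunSeries_eq_top (a := 0) (b := {(l + 1 : ℂ)}) (by simp)
  have hsum := FormalMultilinearSeries.summable _
    (show (-(v / 2) ^ 2 : ℂ) ∈ Metric.eball 0 _ by rw [hradius]; simp)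
  rw [← Complex.summable_ofReal]
  refine hsum.congr fun k => ?_
  rw [FormalMultilinearSeries.apply_eq_pow_smul_coeff, Complex.regularizedHGFunSeries_coeff]
  simp only [Complex.regularizedHGFunCoeff, besselTerm, Multiset.map_zero, Multiset.prod_zero,
    Multiset.map_singleton, Multiset.prod_singleton, smul_eq_mul]
  push_cast [← Complex.Gamma_ofReal]
  rw [neg_pow, ← pow_mul, show (k + l + 1 : ℂ) = l + 1 + k by ring]
  ring

lemma sum_mul_besselTerm (r : ℕ) (l v : ℝ) (k : ℕ) :
    ∑ s ∈ range (r + 1), (-1) ^ s * r.choose s * poch (l + r) s * besselTerm (l + s) v k =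
      k.descFactorial r * besselTerm (l + r) v k := by
  rw [← poch_natCast_sub_add_one]
  have h := sum_choose_mul_poch_div_Gamma r (l + r) (k + l + 1)
  rw [show (k : ℝ) + l + 1 - (l + r) = k - r + 1 by ring] at h
  calc _ = (-1) ^ k / k.factorial * (v / 2) ^ (2 * k) *
        ∑ s ∈ range (r + 1), (-1) ^ s * r.choose s * poch (l + r) s / Gamma (k + l + 1 + s) := by
        rw [mul_sum]
        refine sum_congr rfl fun s _ => ?_
        rw [besselTerm, show (k : ℝ) + (l + s) + 1 = k + l + 1 + s by ring]
        ring
    _ = _ := by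
        rw [h, besselTerm, show (k : ℝ) + (l + r) + 1 = k + l + 1 + r by ring]
        ring

lemma descFactorial_mul_besselTerm (r : ℕ) (l v : ℝ) (m : ℕ) :
    (m + r).descFactorial r * besselTerm l v (m + r) =
      (-1) ^ r * (v / 2) ^ (2 * r) * besselTerm (l + r) v m := by
  have hfact : ((m + r).factorial : ℝ) = m.factorial * (m + r).descFactorial r := by
    rw [← Nat.factorial_mul_descFactorial (Nat.le_add_left r m), Nat.add_sub_cancel, Nat.cast_mul]
  have hdesc : ((m + r).descFactorial r : ℝ) ≠ 0 := by
    exact_mod_cast (Nat.descFactorial_pos.2 (Nat.le_add_left r m)).ne'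
  rw [besselTerm, besselTerm, hfact,
    show ((m + r : ℕ) : ℝ) + l + 1 = m + (l + r) + 1 by push_cast; ring]
  rw [mul_assoc (m.factorial : ℝ), ← mul_assoc]
  field_simp
  ring

lemma sum_mul_regBessel (r : ℕ) (l v : ℝ) :
    ∑ s ∈ range (r + 1), (-1) ^ s * r.choose s * poch (l + r) s * regBessel (l + s) v =
      (-1) ^ r * (v / 2) ^ (2 * r) * regBessel (l + 2 * r) v := by
  have hsum : HasSum (fun k => k.descFactorial r * besselTerm (l + r) v k)
      (∑ s ∈ range (r + 1), (-1) ^ s * r.choose s * poch (l + r) s * regBessel (l + s) v) := by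
    simp_rw [← sum_mul_besselTerm]
    exact hasSum_sum fun s _ => (summable_besselTerm (l + s) v).hasSum.mul_left _
  have hlow : ∑ k ∈ range r, k.descFactorial r * besselTerm (l + r) v k = 0 :=
    sum_eq_zero fun k hk => by simp [Nat.descFactorial_of_lt (mem_range.1 hk)]
  rw [← hasSum_nat_add_iff' r, hlow, sub_zero] at hsum
  simp_rw [descFactorial_mul_besselTerm, add_assoc l, ← two_mul] at hsum
  exact hsum.unique ((summable_besselTerm _ v).hasSum.mul_left _)

lemma integral_rpow_mul_one_sub_rpow {a b : ℝ} (ha : 0 < a) (hb : 0 < b) :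
    ∫ x in (0 : ℝ)..1, x ^ (a - 1) * (1 - x) ^ (b - 1) = ProbabilityTheory.beta a b := by
  rw [ProbabilityTheory.beta_eq_betaIntegralReal a b ha hb, Complex.betaIntegral,
    ← Complex.ofReal_re (∫ x in (0 : ℝ)..1, x ^ (a - 1) * (1 - x) ^ (b - 1)),
    ← intervalIntegral.integral_ofReal]
  congr 1
  refine intervalIntegral.integral_congr_Ioo_of_le zero_le_one fun x hx => ?_
  push_cast [Complex.ofReal_cpow hx.1.le, Complex.ofReal_cpow (sub_nonneg.2 hx.2.le)]
  rfl

lemma integral_abs_mul_comp_sq (f : ℝ → ℝ) {a : ℝ} (ha : 0 ≤ a) :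
    ∫ t in -a..a, |t| * f (t ^ 2) = ∫ x in 0..a ^ 2, f x := by
  set F : ℝ → ℝ := (Set.Iio (a ^ 2)).indicator f with hF
  have hfold : ∫ t in -a..a, |t| * f (t ^ 2) = ∫ t, |t| * F (|t| ^ 2) := by
    rw [intervalIntegral.integral_of_le (by linarith), integral_Ioc_eq_integral_Ioo,
      ← integral_indicator measurableSet_Ioo]
    congr 1 with t
    have hmem : t ∈ Set.Ioo (-a) a ↔ t ^ 2 ∈ Set.Iio (a ^ 2) := by
      rw [Set.mem_Ioo, Set.mem_Iio, sq_lt_sq, abs_of_nonneg ha, abs_lt]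
    simp [hF, Set.indicator_apply, hmem]
  have hsubst : ∫ t in Set.Ioi (0 : ℝ), 2 * (t * F (t ^ 2)) = ∫ x in Set.Ioi (0 : ℝ), F x := by
    rw [← integral_comp_rpow_Ioi_of_pos (g := F) two_pos]
    norm_num [mul_assoc]
  rw [hfold, integral_comp_abs (f := fun t => t * F (t ^ 2)), ← integral_const_mul, hsubst, hF,
    setIntegral_indicator measurableSet_Iio, Set.Ioi_inter_Iio,
    intervalIntegral.integral_of_le (by positivity), integral_Ioc_eq_integral_Ioo]

lemma integral_one_sub_sq_rpow_mul_pow {l : ℝ} (hl : -(1 / 2) < l) (k : ℕ) :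
    ∫ t in (-1 : ℝ)..1, (1 - t ^ 2) ^ (l - 1 / 2) * t ^ (2 * k) =
      ProbabilityTheory.beta (k + 1 / 2) (l + 1 / 2) := by
  have hsubst := integral_abs_mul_comp_sq
    (fun x => x ^ (k + 1 / 2 - 1 : ℝ) * (1 - x) ^ (l + 1 / 2 - 1)) zero_le_one
  rw [one_pow, integral_rpow_mul_one_sub_rpow (by positivity) (by linarith)] at hsubst
  rw [← hsubst]
  refine intervalIntegral.integral_congr_ae ?_
  filter_upwards [volume.ae_ne (0 : ℝ)] with t ht _
  have hpow : t ^ (2 * k) = |t| * (t ^ 2) ^ (k + 1 / 2 - 1 : ℝ) := by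
    rw [show (k + 1 / 2 - 1 : ℝ) = k - 1 / 2 by ring, rpow_sub (by positivity), ← sqrt_eq_rpow,
      sqrt_sq_eq_abs, rpow_natCast, pow_mul]
    field_simp
  rw [hpow, show l + 1 / 2 - 1 = l - 1 / 2 by ring]
  ring

lemma intervalIntegrable_one_sub_sq_rpow {l : ℝ} (hl : -(1 / 2) < l) :
    IntervalIntegrable (fun t : ℝ => (1 - t ^ 2) ^ (l - 1 / 2)) volume (-1) 1 := by
  refine intervalIntegral.intervalIntegrable_of_integral_ne_zero ?_
  have h := integral_one_sub_sq_rpow_mul_pow hl 0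
  simp only [mul_zero, pow_zero, mul_one] at h
  rw [h]
  exact (ProbabilityTheory.beta_pos (by positivity) (by linarith)).ne'

lemma Gamma_natCast_add_half_mul (k : ℕ) :
    Gamma (k + 1 / 2) * (2 ^ (2 * k) * k.factorial) = (2 * k).factorial * √π := by
  have hdup := Gamma_mul_Gamma_add_half (k + 1 / 2)
  rw [add_assoc, add_halves, Gamma_nat_eq_factorial,
    show (2 * (k + 1 / 2) : ℝ) = (2 * k : ℕ) + 1 by push_cast; ring, Gamma_nat_eq_factorial,
    sub_add_cancel_right, rpow_neg two_pos.le, rpow_natCast] at hdup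
  rw [mul_left_comm, hdup]
  field_simp

lemma hasSum_integral_mul_cos {w : ℝ → ℝ} {a b : ℝ} (hw : IntervalIntegrable w volume a b)
    (v : ℝ) :
    HasSum (fun k => (-1) ^ k * v ^ (2 * k) / (2 * k).factorial * ∫ t in a..b, w t * t ^ (2 * k))
      (∫ t in a..b, w t * cos (v * t)) := by
  simp_rw [← intervalIntegral.integral_const_mul]
  refine intervalIntegral.hasSum_integral_of_dominated_convergence
    (fun k t => ‖w t‖ * ((v * t) ^ (2 * k) / (2 * k).factorial))
    (fun k => ?_) (fun k => ae_of_all _ fun t _ => ?_)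
    (ae_of_all _ fun t _ => (hasSum_cosh (v * t)).summable.mul_left _) ?_
    (ae_of_all _ fun t _ => ?_)
  · exact (hw.aestronglyMeasurable_restrict_uIoc.mul
      (Continuous.aestronglyMeasurable (by fun_prop))).const_mul _
  · refine le_of_eq ?_
    rw [← norm_of_nonneg ((even_two_mul k).pow_nonneg (v * t))]
    simp only [norm_mul, norm_div, norm_pow, norm_neg, norm_one, one_pow, one_mul, mul_pow,
      Real.norm_natCast]
    ring
  · simp_rw [tsum_mul_left, (hasSum_cosh _).tsum_eq]
    exact hw.norm.mul_continuousOn (by fun_prop)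
  · convert! (hasSum_cos (v * t)).mul_left (w t) using 2 with k
    ring

lemma integral_mul_exp_of_even {w : ℝ → ℝ} {a : ℝ} (hw : IntervalIntegrable w volume (-a) a)
    (heven : Function.Even w) (v : ℝ) :
    ∫ t in -a..a, (w t : ℂ) * Complex.exp (-Complex.I * (v * t : ℝ)) =
      (∫ t in -a..a, w t * cos (v * t) : ℝ) := by
  have hsin : ∫ t in -a..a, w t * sin (v * t) = 0 := by
    have h := intervalIntegral.integral_comp_neg (a := -a) (b := a) fun t => w t * sin (v * t)
    simp only [heven _, mul_neg, sin_neg, intervalIntegral.integral_neg, neg_neg] at h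
    linarith
  have hint {g : ℝ → ℝ} (hg : Continuous g) :
      IntervalIntegrable (fun t => ((w t * g t : ℝ) : ℂ)) volume (-a) a :=
    have h := hw.mul_continuousOn hg.continuousOn
    ⟨h.1.ofReal, h.2.ofReal⟩
  have hexp (t : ℝ) : (w t : ℂ) * Complex.exp (-Complex.I * (v * t : ℝ)) =
      (w t * cos (v * t) : ℝ) - Complex.I * (w t * sin (v * t) : ℝ) := by
    rw [neg_mul, mul_comm Complex.I, ← neg_mul, ← Complex.ofReal_neg, Complex.exp_mul_I]
    push_cast [Complex.cos_neg, Complex.sin_neg]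
    ring
  simp_rw [hexp]
  rw [intervalIntegral.integral_sub (hint (by fun_prop)) ((hint (by fun_prop)).const_mul _),
    intervalIntegral.integral_const_mul, intervalIntegral.integral_ofReal,
    intervalIntegral.integral_ofReal, hsin, Complex.ofReal_zero, mul_zero, sub_zero]

lemma mul_beta_eq_mul_besselTerm {l : ℝ} (hl : -(1 / 2) < l) (v : ℝ) (k : ℕ) :
    (-1) ^ k * v ^ (2 * k) / (2 * k).factorial * ProbabilityTheory.beta (k + 1 / 2) (l + 1 / 2) =
      √π * Gamma (l + 1 / 2) * besselTerm l v k := by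
  have hGamma : Gamma (k + 1 / 2) = (2 * k).factorial * √π / (2 ^ (2 * k) * k.factorial) :=
    eq_div_of_mul_eq (by positivity) (Gamma_natCast_add_half_mul k)
  have hpos : 0 < Gamma (k + l + 1) := Gamma_pos_of_pos (by linarith [k.cast_nonneg (α := ℝ)])
  rw [ProbabilityTheory.beta, hGamma, besselTerm, div_pow,
    show (k + 1 / 2 + (l + 1 / 2) : ℝ) = k + l + 1 by ring]
  field_simp

lemma integral_one_sub_sq_rpow_mul_cos {l : ℝ} (hl : -(1 / 2) < l) (v : ℝ) :
    ∫ t in (-1 : ℝ)..1, (1 - t ^ 2) ^ (l - 1 / 2) * cos (v * t) =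
      √π * Gamma (l + 1 / 2) * regBessel l v := by
  have h := hasSum_integral_mul_cos (intervalIntegrable_one_sub_sq_rpow hl) v
  simp_rw [integral_one_sub_sq_rpow_mul_pow hl, mul_beta_eq_mul_besselTerm hl] at h
  exact h.unique ((summable_besselTerm l v).hasSum.mul_left _)

lemma integral_one_sub_sq_rpow_mul_pow_mul_cos {l : ℝ} (hl : -(1 / 2) < l) (v : ℝ) (s : ℕ) :
    ∫ t in (-1 : ℝ)..1, (1 - t ^ 2) ^ (l - 1 / 2) * (1 - t ^ 2) ^ s * cos (v * t) =
      √π * Gamma (l + 1 / 2) * (poch (l + 1 / 2) s * regBessel (l + s) v) := by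
  have hls : -(1 / 2) < l + s := by linarith [s.cast_nonneg (α := ℝ)]
  calc _ = ∫ t in (-1 : ℝ)..1, (1 - t ^ 2) ^ (l + s - 1 / 2) * cos (v * t) := by
        refine intervalIntegral.integral_congr_Ioo_of_le (by norm_num) fun t ht => ?_
        have hpos : 0 < 1 - t ^ 2 := by nlinarith [ht.1, ht.2]
        simp only [← rpow_add_natCast hpos.ne', sub_add_eq_add_sub]
    _ = √π * (Gamma (l + 1 / 2 + s) * regBessel (l + s) v) := by
        rw [integral_one_sub_sq_rpow_mul_cos hls, add_right_comm, mul_assoc]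
    _ = _ := by
        rw [Gamma_add_natCast (by linarith)]
        ring

lemma continuous_S2r (r : ℕ) (l : ℝ) : Continuous (S2r r l) := by
  unfold S2r
  fun_prop

lemma integral_one_sub_sq_rpow_mul_S2r_mul_cos {l : ℝ} (hl : -(1 / 2) < l) (v : ℝ) (r : ℕ) :
    ∫ t in (-1 : ℝ)..1, (1 - t ^ 2) ^ (l - 1 / 2) * S2r r l t * cos (v * t) =
      √π * Gamma (l + 1 / 2) * ((-1) ^ r * (v / 2) ^ (2 * r) * regBessel (l + 2 * r) v) := by
  have hint (s : ℕ) : IntervalIntegrable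
      (fun t => (1 - t ^ 2) ^ (l - 1 / 2) * (1 - t ^ 2) ^ s * cos (v * t)) volume (-1) 1 :=
    ((intervalIntegrable_one_sub_sq_rpow hl).mul_continuousOn (by fun_prop)).mul_continuousOn
      (by fun_prop)
  have hexpand (t : ℝ) : (1 - t ^ 2) ^ (l - 1 / 2) * S2r r l t * cos (v * t) =
      ∑ s ∈ range (r + 1), (-1) ^ s * r.choose s * (poch (l + r) s / poch (l + 1 / 2) s) *
        ((1 - t ^ 2) ^ (l - 1 / 2) * (1 - t ^ 2) ^ s * cos (v * t)) := by
    rw [S2r, mul_sum, sum_mul]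
    exact sum_congr rfl fun s _ => by ring
  simp_rw [hexpand]
  rw [intervalIntegral.integral_finsetSum fun s _ => (hint s).const_mul _, ← sum_mul_regBessel,
    mul_sum]
  refine sum_congr rfl fun s _ => ?_
  have hcancel := div_mul_cancel₀ (poch (l + r) s)
    (poch_pos (show 0 < l + 1 / 2 by linarith) s).ne'
  rw [intervalIntegral.integral_const_mul, integral_one_sub_sq_rpow_mul_pow_mul_cos hl]
  linear_combination
    (-1) ^ s * r.choose s * (√π * Gamma (l + 1 / 2)) * regBessel (l + s) v * hcancel

lemma cgeg_mul_sqrt_pi_mul_Gamma {l : ℝ} (hl : -(1 / 2) < l) :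
    cgeg l * (√π * Gamma (l + 1 / 2)) = Gamma (l + 1) :=
  div_mul_cancel₀ _ (mul_pos (by positivity) (Gamma_pos_of_pos (by linarith))).ne'

lemma nbessel_eq_cgeg_mul_integral {l : ℝ} (hl : -(1 / 2) < l) (v : ℝ) :
    nbessel l v = cgeg l * ∫ t in (-1 : ℝ)..1, (1 - t ^ 2) ^ (l - 1 / 2) * cos (v * t) := by
  rw [integral_one_sub_sq_rpow_mul_cos hl, ← mul_assoc, cgeg_mul_sqrt_pi_mul_Gamma hl,
    nbessel_eq_Gamma_mul_regBessel]

lemma mul_nbessel_add_eq_cgeg_mul_integral_S2r {l : ℝ} (hl : -(1 / 2) < l) (v : ℝ) (r : ℕ) :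
    (-1) ^ r * (v ^ (2 * r) / (2 ^ (2 * r) * poch (l + 1) (2 * r))) * nbessel (l + 2 * r) v =
      cgeg l * ∫ t in (-1 : ℝ)..1, (1 - t ^ 2) ^ (l - 1 / 2) * S2r r l t * cos (v * t) := by
  have hGamma := Gamma_add_natCast (show 0 < l + 1 by linarith) (2 * r)
  have hpoch := (poch_pos (show 0 < l + 1 by linarith) (2 * r)).ne'
  push_cast at hGamma
  rw [integral_one_sub_sq_rpow_mul_S2r_mul_cos hl, ← mul_assoc, cgeg_mul_sqrt_pi_mul_Gamma hl,
    nbessel_eq_Gamma_mul_regBessel, add_right_comm, hGamma, div_pow]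
  field_simp

/-- integral representation of e_{2r}(v, lambda). -/
theorem stmt7 (r : ℕ) (hr : 1 ≤ r) (l : ℝ) (hl : -(1 / 2 : ℝ) < l) (v : ℝ) :
    (e2r r l v : ℂ) =
      (cgeg l : ℂ) * ∫ t in (-1 : ℝ)..1,
        (((1 - t ^ 2) ^ (l - 1 / 2) * (1 + Real.sign v * S2r r l t) : ℝ) : ℂ) *
          Complex.exp (-Complex.I * (v * t : ℝ)) := by
  set w : ℝ → ℝ := fun t => (1 - t ^ 2) ^ (l - 1 / 2)
  have hw : IntervalIntegrable w volume (-1) 1 := intervalIntegrable_one_sub_sq_rpow hl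
  have hS := continuous_S2r r l
  have heven : Function.Even fun t => w t * (1 + sign v * S2r r l t) := fun t => by
    simp only [w, S2r, neg_sq]
  have hsplit (t : ℝ) : w t * (1 + sign v * S2r r l t) * cos (v * t) =
      w t * cos (v * t) + sign v * (w t * S2r r l t * cos (v * t)) := by ring
  rw [integral_mul_exp_of_even (hw.mul_continuousOn (by fun_prop)) heven, ← Complex.ofReal_mul,
    Complex.ofReal_inj]
  simp_rw [hsplit]
  rw [intervalIntegral.integral_add (hw.mul_continuousOn (by fun_prop))
      (((hw.mul_continuousOn hS.continuousOn).mul_continuousOn (by fun_prop)).const_mul _),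
    intervalIntegral.integral_const_mul, e2r, nbessel_eq_cgeg_mul_integral hl,
    mul_nbessel_add_eq_cgeg_mul_integral_S2r hl]
  ring
end
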